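/- Let μ ∈ (0,1]. The function h_μ(ξ) = (tanh(√μ |ξ|)/(√μ |ξ|))^{-1/2} (with h_μ(0) = 1) is smooth on ℝ, and for every n ∈ ℕ there is a constant C_n, independent of μ, such that |h_μ^{(n)}(ξ)| ≤ C_n μ^{n/2} ⟨√μ ξ⟩^{1/2 - n} for all ξ ∈ ℝ, where h_μ^{(n)} denotes the n-th derivative. -/

import Mathlib

noncomputable section

/-- The Japanese bracket `⟨x⟩ = (1 + x²)^{1/2}`. -/
def jap (x : ℝ) : ℝ := (1 + x ^ 2) ^ ((1 : ℝ) / 2)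

/-- The symbol `T_μ(ξ) = tanh(√μ |ξ|)/(√μ |ξ|)` for `ξ ≠ 0`, with value `1` at `ξ = 0`. -/
def Tsymb (μ ξ : ℝ) : ℝ :=
  if ξ = 0 then 1 else Real.tanh (Real.sqrt μ * |ξ|) / (Real.sqrt μ * |ξ|)

/-- `h_μ(ξ) = (tanh(√μ |ξ|)/(√μ |ξ|))^{-1/2}`, with `h_μ(0) = 1`. -/
def hsymb (μ ξ : ℝ) : ℝ := (Tsymb μ ξ) ^ (-(1 : ℝ) / 2)

/-!
Everything reduces to `t(x) = tanh x / x`, since `T_μ(ξ) = t(√μ ξ)`: each derivative in `ξ` then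
brings out one factor `√μ`. The function `t` is a symbol of order `-1`: `tanh` is a symbol of
order `0`, because `tanh' = 1 - tanh²` decays exponentially, and dividing by `x` lowers the order by
one. It is elliptic, since `t(x) ≥ 1 / (1 + |x|)`, and real powers of a positive elliptic symbol of
order `m` are symbols of order `m p`, by induction on the number of derivatives through
`(f ^ p)' = p f' f ^ (p - 1)`.
-/

open Asymptotics Filter
open scoped ContDiff

lemma jap_eq_sqrt (x : ℝ) : jap x = √(1 + x ^ 2) := (Real.sqrt_eq_rpow _).symm

lemma one_le_jap (x : ℝ) : 1 ≤ jap x := by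
  rw [jap_eq_sqrt, Real.one_le_sqrt]
  linarith [sq_nonneg x]

lemma jap_pos (x : ℝ) : 0 < jap x := one_pos.trans_le (one_le_jap x)

lemma continuous_jap : Continuous jap := by
  rw [funext jap_eq_sqrt]
  fun_prop

lemma continuous_jap_rpow (m : ℝ) : Continuous fun x ↦ jap x ^ m :=
  continuous_jap.rpow_const fun x ↦ .inl (jap_pos x).ne'

lemma jap_le_one_add_abs (x : ℝ) : jap x ≤ 1 + |x| := by
  rw [jap_eq_sqrt, Real.sqrt_le_left (by positivity)]
  nlinarith [abs_nonneg x, sq_abs x]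

lemma one_add_abs_le_two_mul_jap (x : ℝ) : 1 + |x| ≤ 2 * jap x := by
  have h : |x| ≤ jap x := by
    rw [jap_eq_sqrt]
    exact Real.abs_le_sqrt (by linarith)
  linarith [one_le_jap x]

lemma jap_rpow_isBigO_of_le {a b : ℝ} (hab : a ≤ b) :
    (fun x ↦ jap x ^ a) =O[⊤] fun x ↦ jap x ^ b :=
  .of_norm_le fun x ↦ by
    rw [Real.norm_of_nonneg (Real.rpow_nonneg (jap_pos x).le _)]
    exact Real.rpow_le_rpow_of_exponent_le (one_le_jap x) hab

lemma inv_isBigO_jap_inv : (fun x : ℝ ↦ x⁻¹) =O[cocompact ℝ] fun x ↦ (jap x)⁻¹ := by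
  have h : ∀ᶠ x : ℝ in cocompact ℝ, 1 ≤ |x| :=
    tendsto_norm_cocompact_atTop.eventually_ge_atTop 1
  refine IsBigO.inv_rev (.of_bound 2 ?_) (.of_forall fun x hx ↦ absurd hx (jap_pos x).ne')
  filter_upwards [h] with x hx
  rw [Real.norm_of_nonneg (jap_pos x).le, Real.norm_eq_abs]
  linarith [jap_le_one_add_abs x]

lemma exp_neg_abs_isBigO_jap_rpow (m : ℝ) :
    (fun x ↦ Real.exp (-|x|)) =O[⊤] fun x ↦ jap x ^ m := by
  obtain ⟨K, hK⟩ := exists_nat_ge (-m)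
  refine IsBigO.trans (.of_bound (K.factorial * Real.exp 1) (.of_forall fun x ↦ ?_))
    (jap_rpow_isBigO_of_le (neg_le.mp hK))
  have hpow : jap x ^ K ≤ K.factorial * Real.exp (1 + |x|) :=
    calc jap x ^ K ≤ (1 + |x|) ^ K := pow_le_pow_left₀ (jap_pos x).le (jap_le_one_add_abs x) K
      _ ≤ K.factorial * Real.exp (1 + |x|) := by
        rw [← div_le_iff₀' (by positivity)]
        exact Real.pow_div_factorial_le_exp _ (by positivity) K
  have hj : 0 < jap x ^ K := pow_pos (jap_pos x) K
  rw [Real.rpow_neg (jap_pos x).le, Real.rpow_natCast, Real.norm_of_nonneg (Real.exp_pos _).le,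
    Real.norm_of_nonneg (inv_nonneg.mpr hj.le), ← div_eq_mul_inv, le_div_iff₀ hj, Real.exp_neg,
    inv_mul_le_iff₀ (Real.exp_pos _)]
  calc jap x ^ K ≤ K.factorial * Real.exp (1 + |x|) := hpow
    _ = Real.exp |x| * (K.factorial * Real.exp 1) := by rw [Real.exp_add]; ring

lemma isBigO_top_of_isBigO_cocompact {α E F : Type*} [TopologicalSpace α]
    [SeminormedAddCommGroup E] [NormedAddCommGroup F] {f : α → E} {g : α → F}
    (hf : Continuous f) (hg : Continuous g) (hg₀ : ∀ x, g x ≠ 0) (h : f =O[cocompact α] g) :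
    f =O[⊤] g := by
  obtain ⟨C, hC⟩ := h.bound
  obtain ⟨K, hK, hKC⟩ := mem_cocompact.mp hC
  have h_in : f =O[𝓟 K] g :=
    (hf.continuousOn.isBigO_principal hK (c := (1 : ℝ)) (by simp)).trans
      (hg.continuousOn.isBigO_rev_principal hK (fun x _ ↦ hg₀ x) 1)
  have h_out : f =O[𝓟 Kᶜ] g := .of_bound C (eventually_principal.mpr hKC)
  simpa using h_in.sup h_out

section JapaneseBracketGrowth

variable {E : Type*} [NormedAddCommGroup E] [NormedSpace ℝ E]

lemma isBigO_jap_rpow_smul {a b : ℝ} {φ : ℝ → ℝ} {f : ℝ → E}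
    (hφ : φ =O[⊤] fun x ↦ jap x ^ a) (hf : f =O[⊤] fun x ↦ jap x ^ b) :
    (fun x ↦ φ x • f x) =O[⊤] fun x ↦ jap x ^ (a + b) :=
  (hφ.smul hf).congr_right fun x ↦ (Real.rpow_add (jap_pos x) a b).symm

lemma isBigO_jap_rpow_of_id_smul {m : ℝ} {f : ℝ → E} (hf : Continuous f)
    (h : (fun x ↦ x • f x) =O[⊤] fun x ↦ jap x ^ (m + 1)) : f =O[⊤] fun x ↦ jap x ^ m := by
  refine isBigO_top_of_isBigO_cocompact hf (continuous_jap_rpow m)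
    (fun x ↦ (Real.rpow_pos_of_pos (jap_pos x) m).ne') ?_
  refine (inv_isBigO_jap_inv.smul (h.mono le_top)).congr' ?_ (.of_forall fun x ↦ ?_)
  · filter_upwards [(Set.finite_singleton (0 : ℝ)).isCompact.compl_mem_cocompact] with x hx
    exact inv_smul_smul₀ hx (f x)
  · have hj := (jap_pos x).ne'
    simp only [smul_eq_mul, Real.rpow_add_one hj]
    field_simp

end JapaneseBracketGrowth

/-- Symbols of order `m` on the line, with only the first `N` derivatives controlled: the class
`S^m` of functions with `f⁽ⁿ⁾ = O(⟨x⟩ ^ (m - n))` is the intersection over all `N`. The filter `⊤`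
makes the bounds hold on all of `ℝ`. Counting derivatives lets the closure properties below be
proved by induction on `N`. -/
structure IsSymbol {E : Type*} [NormedAddCommGroup E] [NormedSpace ℝ E]
    (N : ℕ) (m : ℝ) (f : ℝ → E) : Prop where
  contDiff : ContDiff ℝ N f
  isBigO_iteratedDeriv (n : ℕ) (hn : n ≤ N) :
    iteratedDeriv n f =O[⊤] fun x ↦ jap x ^ (m - n)

namespace IsSymbol

variable {E : Type*} [NormedAddCommGroup E] [NormedSpace ℝ E] {N : ℕ} {a b m : ℝ} {f g : ℝ → E}

lemma isBigO (hf : IsSymbol N m f) : f =O[⊤] fun x ↦ jap x ^ m := by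
  simpa using hf.isBigO_iteratedDeriv 0 N.zero_le

lemma zero_iff : IsSymbol 0 m f ↔ Continuous f ∧ f =O[⊤] fun x ↦ jap x ^ m := by
  refine ⟨fun h ↦ ⟨h.contDiff.continuous, h.isBigO⟩, fun ⟨hf, hO⟩ ↦ ⟨contDiff_zero.mpr hf, ?_⟩⟩
  intro n hn
  obtain rfl := Nat.le_zero.mp hn
  simpa using hO

lemma succ_iff : IsSymbol (N + 1) m f ↔
    Differentiable ℝ f ∧ (f =O[⊤] fun x ↦ jap x ^ m) ∧ IsSymbol N (m - 1) (deriv f) := by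
  have order (n : ℕ) : m - (n + 1 : ℕ) = m - 1 - n := by push_cast; ring
  constructor
  · intro h
    obtain ⟨hd, -, hd'⟩ := contDiff_succ_iff_deriv.mp (by simpa using h.contDiff)
    refine ⟨hd, h.isBigO, hd', fun n hn ↦ ?_⟩
    rw [← iteratedDeriv_succ', ← order]
    exact h.isBigO_iteratedDeriv (n + 1) (Nat.succ_le_succ hn)
  · rintro ⟨hd, hO, h⟩
    refine ⟨by simpa using contDiff_succ_iff_deriv.mpr ⟨hd, by simp, h.contDiff⟩, ?_⟩
    rintro (_ | n) hn
    · simpa using hO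
    · rw [iteratedDeriv_succ', order]
      exact h.isBigO_iteratedDeriv n (Nat.le_of_succ_le_succ hn)

lemma succ_of_hasDerivAt {f' : ℝ → E} (hf : ∀ x, HasDerivAt f (f' x) x)
    (hO : f =O[⊤] fun x ↦ jap x ^ m) (hf' : IsSymbol N (m - 1) f') : IsSymbol (N + 1) m f :=
  succ_iff.mpr ⟨fun x ↦ (hf x).differentiableAt, hO, by rwa [funext fun x ↦ (hf x).deriv]⟩

lemma of_succ (hf : IsSymbol (N + 1) m f) : IsSymbol N m f :=
  ⟨hf.contDiff.of_le (by exact_mod_cast N.le_succ),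
    fun n hn ↦ hf.isBigO_iteratedDeriv n (Nat.le_succ_of_le hn)⟩

protected lemma add (hf : IsSymbol N m f) (hg : IsSymbol N m g) :
    IsSymbol N m fun x ↦ f x + g x := by
  refine ⟨hf.contDiff.add hg.contDiff, fun n hn ↦ ?_⟩
  have hn' : (n : ℕ∞ω) ≤ N := by exact_mod_cast hn
  refine ((hf.isBigO_iteratedDeriv n hn).add (hg.isBigO_iteratedDeriv n hn)).congr_left fun x ↦ ?_
  exact (iteratedDeriv_add (hf.contDiff.of_le hn').contDiffAt
    (hg.contDiff.of_le hn').contDiffAt).symm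

protected lemma const_smul (c : ℝ) (hf : IsSymbol N m f) : IsSymbol N m fun x ↦ c • f x := by
  refine ⟨hf.contDiff.const_smul c, fun n hn ↦ ?_⟩
  exact ((hf.isBigO_iteratedDeriv n hn).const_smul_left c).congr_left fun x ↦
    (iteratedDeriv_fun_const_smul_field c f).symm

protected lemma sub (hf : IsSymbol N m f) (hg : IsSymbol N m g) :
    IsSymbol N m fun x ↦ f x - g x := by
  simpa [sub_eq_add_neg] using hf.add (hg.const_smul (-1))

protected lemma smul {φ : ℝ → ℝ} (hφ : IsSymbol N a φ) (hf : IsSymbol N b f) :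
    IsSymbol N (a + b) fun x ↦ φ x • f x := by
  induction N generalizing a b φ f with
  | zero =>
    exact zero_iff.mpr ⟨hφ.contDiff.continuous.smul hf.contDiff.continuous,
      isBigO_jap_rpow_smul hφ.isBigO hf.isBigO⟩
  | succ N ih =>
    obtain ⟨hφd, -, hφ'⟩ := succ_iff.mp hφ
    obtain ⟨hfd, -, hf'⟩ := succ_iff.mp hf
    have h_left : IsSymbol N (a + b - 1) fun x ↦ φ x • deriv f x := by
      simpa only [add_sub_assoc] using ih hφ.of_succ hf'
    have h_right : IsSymbol N (a + b - 1) fun x ↦ deriv φ x • f x := by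
      simpa only [sub_add_eq_add_sub] using ih hφ' hf.of_succ
    exact succ_of_hasDerivAt (fun x ↦ (hφd x).hasDerivAt.fun_smul (hfd x).hasDerivAt)
      (isBigO_jap_rpow_smul hφ.isBigO hf.isBigO) (h_left.add h_right)

/-- Differentiating `x • f` gives `x • f' = (x • f)' - f`, so that `f'` satisfies the hypotheses
with `N` and `m` lowered by one. -/
lemma of_id_smul (hf : ContDiff ℝ N f) (h : IsSymbol N (m + 1) fun x ↦ x • f x) :
    IsSymbol N m f := by
  induction N generalizing m f with
  | zero => exact zero_iff.mpr ⟨hf.continuous, isBigO_jap_rpow_of_id_smul hf.continuous h.isBigO⟩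
  | succ N ih =>
    obtain ⟨hd, -, hf'⟩ := contDiff_succ_iff_deriv.mp (by simpa using hf)
    have hfN : IsSymbol N m f := ih hf.of_succ h.of_succ
    refine succ_iff.mpr ⟨hd, isBigO_jap_rpow_of_id_smul hf.continuous h.isBigO, ih hf' ?_⟩
    have hderiv (x : ℝ) : x • deriv f x = deriv (fun y ↦ y • f y) x - f x := by
      simp [deriv_fun_smul differentiableAt_fun_id (hd x)]
    have hxf' : IsSymbol N m (deriv fun x ↦ x • f x) := by simpa using (succ_iff.mp h).2.2
    rw [funext hderiv, sub_add_cancel]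
    exact hxf'.sub hfN

lemma rpow {φ : ℝ → ℝ} (hφ : IsSymbol N m φ) (hpos : ∀ x, 0 < φ x)
    (hell : (fun x ↦ jap x ^ m) =O[⊤] φ) (p : ℝ) : IsSymbol N (m * p) fun x ↦ φ x ^ p := by
  have hO (q : ℝ) : (fun x ↦ φ x ^ q) =O[⊤] fun x ↦ jap x ^ (m * q) := by
    have hΘ : φ =Θ[⊤] fun x ↦ jap x ^ m := ⟨hφ.isBigO, hell⟩
    refine (hΘ.rpow (r := q) (.of_forall fun x ↦ (hpos x).le) (.of_forall fun x ↦
      Real.rpow_nonneg (jap_pos x).le m)).isBigO.congr_right fun x ↦ ?_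
    exact (Real.rpow_mul (jap_pos x).le m q).symm
  induction N generalizing p with
  | zero =>
    exact zero_iff.mpr ⟨hφ.contDiff.continuous.rpow_const fun x ↦ .inl (hpos x).ne', hO p⟩
  | succ N ih =>
    obtain ⟨hd, -, hφ'⟩ := succ_iff.mp hφ
    have hderiv (x : ℝ) :
        HasDerivAt (fun y ↦ φ y ^ p) (p • (deriv φ x • φ x ^ (p - 1))) x := by
      refine ((hd x).hasDerivAt.rpow_const (.inl (hpos x).ne')).congr_deriv ?_
      simp only [smul_eq_mul]
      ring
    refine succ_of_hasDerivAt hderiv (hO p) ?_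
    rw [show m * p - 1 = m - 1 + m * (p - 1) by ring]
    exact (hφ'.smul (ih hφ.of_succ (p - 1))).const_smul p

lemma exists_norm_iteratedDeriv_comp_mul_le (hf : IsSymbol N m f) :
    ∃ C > 0, ∀ c ξ : ℝ, ‖iteratedDeriv N (fun x ↦ f (c * x)) ξ‖ ≤
      C * |c| ^ N * jap (c * ξ) ^ (m - N) := by
  obtain ⟨C, hC₀, hC⟩ := (hf.isBigO_iteratedDeriv N le_rfl).exists_pos
  refine ⟨C, hC₀, fun c ξ ↦ ?_⟩
  have hξ := isBigOWith_top.mp hC (c * ξ)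
  rw [Real.norm_of_nonneg (Real.rpow_nonneg (jap_pos _).le _)] at hξ
  have hscale : iteratedDeriv N (fun x ↦ f (c * x)) ξ = c ^ N • iteratedDeriv N f (c * ξ) :=
    congrFun (iteratedDeriv_comp_const_smul hf.contDiff c) ξ
  calc ‖iteratedDeriv N (fun x ↦ f (c * x)) ξ‖ = |c| ^ N * ‖iteratedDeriv N f (c * ξ)‖ := by
        rw [hscale, norm_smul, norm_pow, Real.norm_eq_abs]
    _ ≤ |c| ^ N * (C * jap (c * ξ) ^ (m - N)) := by gcongr
    _ = C * |c| ^ N * jap (c * ξ) ^ (m - N) := by ring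

end IsSymbol

lemma contDiff_tanh {n : ℕ∞ω} : ContDiff ℝ n Real.tanh := by
  rw [funext Real.tanh_eq_sinh_div_cosh]
  exact Real.contDiff_sinh.div Real.contDiff_cosh fun x ↦ (Real.cosh_pos x).ne'

lemma one_sub_tanh_sq (x : ℝ) : 1 - Real.tanh x ^ 2 = (Real.cosh x ^ 2)⁻¹ := by
  have := (Real.cosh_pos x).ne'
  rw [Real.tanh_eq_sinh_div_cosh]
  field_simp
  linarith [Real.cosh_sq x]

lemma hasDerivAt_tanh (x : ℝ) : HasDerivAt Real.tanh (1 - Real.tanh x ^ 2) x := by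
  rw [one_sub_tanh_sq, funext Real.tanh_eq_sinh_div_cosh]
  refine ((Real.hasDerivAt_sinh x).fun_div (Real.hasDerivAt_cosh x)
    (Real.cosh_pos x).ne').congr_deriv ?_
  rw [← sq, ← sq, Real.cosh_sq_sub_sinh_sq, one_div]

lemma hasDerivAt_one_sub_tanh_sq (x : ℝ) : HasDerivAt (fun y ↦ 1 - Real.tanh y ^ 2)
    ((-2 : ℝ) • (Real.tanh x • (1 - Real.tanh x ^ 2))) x := by
  refine (((hasDerivAt_tanh x).fun_pow 2).const_sub 1).congr_deriv ?_
  simp only [smul_eq_mul]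
  ring

lemma one_sub_tanh_sq_isBigO_jap_rpow (m : ℝ) :
    (fun x ↦ 1 - Real.tanh x ^ 2) =O[⊤] fun x ↦ jap x ^ m := by
  refine IsBigO.trans (.of_bound 2 (.of_forall fun x ↦ ?_)) (exp_neg_abs_isBigO_jap_rpow m)
  have hcosh : Real.exp |x| / 2 ≤ Real.cosh x ^ 2 :=
    calc Real.exp |x| / 2 ≤ Real.cosh |x| := by
          rw [Real.cosh_eq]
          linarith [Real.exp_pos (-|x|)]
      _ = Real.cosh x := Real.cosh_abs x
      _ ≤ Real.cosh x ^ 2 := le_self_pow₀ (Real.one_le_cosh x) two_ne_zero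
  rw [one_sub_tanh_sq, Real.norm_of_nonneg (by positivity), Real.norm_of_nonneg (by positivity),
    Real.exp_neg]
  calc (Real.cosh x ^ 2)⁻¹ ≤ (Real.exp |x| / 2)⁻¹ := inv_anti₀ (by positivity) hcosh
    _ = 2 * (Real.exp |x|)⁻¹ := by rw [inv_div, div_eq_mul_inv]

lemma isSymbol_tanh_and_one_sub_tanh_sq (N : ℕ) :
    IsSymbol N 0 Real.tanh ∧ ∀ m, IsSymbol N m fun x ↦ 1 - Real.tanh x ^ 2 := by
  have hO : Real.tanh =O[⊤] fun x ↦ jap x ^ (0 : ℝ) :=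
    .of_norm_le fun x ↦ by simpa using (Real.abs_tanh_lt_one x).le
  induction N with
  | zero =>
    have hcont : Continuous Real.tanh := (contDiff_tanh (n := 0)).continuous
    exact ⟨IsSymbol.zero_iff.mpr ⟨hcont, hO⟩,
      fun m ↦ IsSymbol.zero_iff.mpr ⟨by fun_prop, one_sub_tanh_sq_isBigO_jap_rpow m⟩⟩
  | succ N ih =>
    obtain ⟨htanh, hsech⟩ := ih
    refine ⟨.succ_of_hasDerivAt hasDerivAt_tanh hO (hsech _), fun m ↦
      .succ_of_hasDerivAt hasDerivAt_one_sub_tanh_sq (one_sub_tanh_sq_isBigO_jap_rpow m) ?_⟩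
    simpa only [zero_add] using (htanh.smul (hsech (m - 1))).const_smul (-2)

lemma div_one_add_le_tanh {x : ℝ} (hx : 0 ≤ x) : x / (1 + x) ≤ Real.tanh x := by
  rw [Real.tanh_eq, div_le_div_iff₀ (by positivity) (by positivity)]
  have hexp : (2 * x + 1) * Real.exp (-x) ≤ Real.exp x :=
    calc (2 * x + 1) * Real.exp (-x) ≤ Real.exp (2 * x) * Real.exp (-x) := by
          gcongr
          exact Real.add_one_le_exp _
      _ = Real.exp x := by rw [← Real.exp_add]; ring_nf
  linarith

lemma analyticAt_dslope {𝕜 E : Type*} [NontriviallyNormedField 𝕜] [NormedAddCommGroup E]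
    [NormedSpace 𝕜 E] {f : 𝕜 → E} {a b : 𝕜} (ha : AnalyticAt 𝕜 f a) (hb : AnalyticAt 𝕜 f b) :
    AnalyticAt 𝕜 (dslope f a) b := by
  rcases eq_or_ne b a with rfl | hne
  · obtain ⟨p, hp⟩ := ha
    exact ⟨_, hp.has_fpower_series_dslope_fslope⟩
  · refine AnalyticAt.congr ?_ (dslope_eventuallyEq_slope_of_ne f hne).symm
    exact ((analyticAt_id.sub analyticAt_const).inv (sub_ne_zero.mpr hne)).smul
      (hb.sub analyticAt_const)

/-- The hyperbolic analogue `tanh x / x` of `Real.sinc`; as a divided difference at `0` it takes the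
value `tanh' 0 = 1` at the origin. -/
def tanhc (x : ℝ) : ℝ := dslope Real.tanh 0 x

lemma tanhc_zero : tanhc 0 = 1 := by
  simp [tanhc, (hasDerivAt_tanh 0).deriv]

lemma mul_tanhc (x : ℝ) : x * tanhc x = Real.tanh x := by
  simpa [tanhc] using sub_smul_dslope Real.tanh 0 x

lemma tanhc_of_ne_zero {x : ℝ} (hx : x ≠ 0) : tanhc x = Real.tanh x / x :=
  eq_div_of_mul_eq hx (by rw [mul_comm, mul_tanhc])

lemma contDiff_tanhc {n : ℕ∞ω} : ContDiff ℝ n tanhc :=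
  have htanh (x : ℝ) : AnalyticAt ℝ Real.tanh x := (contDiff_tanh (n := ω)).contDiffAt.analyticAt
  contDiff_iff_contDiffAt.mpr fun x ↦ (analyticAt_dslope (htanh 0) (htanh x)).contDiffAt

lemma tanhc_abs (x : ℝ) : tanhc |x| = tanhc x := by
  rcases eq_or_ne x 0 with rfl | hx
  · rw [abs_zero]
  · rcases abs_choice x with h | h <;> rw [h]
    rw [tanhc_of_ne_zero hx, tanhc_of_ne_zero (neg_ne_zero.mpr hx), Real.tanh_neg, neg_div_neg_eq]

lemma inv_one_add_abs_le_tanhc (x : ℝ) : (1 + |x|)⁻¹ ≤ tanhc x := by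
  rcases eq_or_ne x 0 with rfl | hx
  · simp [tanhc_zero]
  · have hx' : 0 < |x| := abs_pos.mpr hx
    rw [← tanhc_abs, tanhc_of_ne_zero hx'.ne', le_div_iff₀ hx', inv_mul_eq_div]
    exact div_one_add_le_tanh hx'.le

lemma tanhc_pos (x : ℝ) : 0 < tanhc x :=
  (inv_pos.mpr (by positivity)).trans_le (inv_one_add_abs_le_tanhc x)

lemma jap_rpow_neg_one_isBigO_tanhc : (fun x ↦ jap x ^ (-1 : ℝ)) =O[⊤] tanhc := by
  refine .of_bound 2 (.of_forall fun x ↦ ?_)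
  rw [Real.rpow_neg_one, Real.norm_of_nonneg (inv_nonneg.mpr (jap_pos x).le),
    Real.norm_of_nonneg (tanhc_pos x).le]
  calc (jap x)⁻¹ = 2 * (2 * jap x)⁻¹ := by rw [mul_inv]; ring
    _ ≤ 2 * (1 + |x|)⁻¹ := by
      gcongr
      exact one_add_abs_le_two_mul_jap x
    _ ≤ 2 * tanhc x := by
      gcongr
      exact inv_one_add_abs_le_tanhc x

lemma isSymbol_tanhc (N : ℕ) : IsSymbol N (-1) tanhc := by
  refine IsSymbol.of_id_smul contDiff_tanhc ?_
  simpa [mul_tanhc] using (isSymbol_tanh_and_one_sub_tanh_sq N).1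

lemma isSymbol_tanhc_rpow (N : ℕ) (p : ℝ) : IsSymbol N (-p) fun x ↦ tanhc x ^ p := by
  simpa using (isSymbol_tanhc N).rpow tanhc_pos jap_rpow_neg_one_isBigO_tanhc p

lemma Tsymb_eq_tanhc {μ : ℝ} (hμ : 0 < μ) (ξ : ℝ) : Tsymb μ ξ = tanhc (√μ * ξ) := by
  rcases eq_or_ne ξ 0 with rfl | hξ
  · simp [Tsymb, tanhc_zero]
  · have hs : 0 < √μ := Real.sqrt_pos.mpr hμ
    have hne : |√μ * ξ| ≠ 0 := abs_ne_zero.mpr (mul_ne_zero hs.ne' hξ)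
    rw [Tsymb, if_neg hξ, ← tanhc_abs, tanhc_of_ne_zero hne, abs_mul, abs_of_pos hs]

theorem hsymb_smooth_and_deriv_bounds_general (p : ℝ) :
    (∀ μ : ℝ, 0 < μ → ContDiff ℝ ∞ fun ξ ↦ Tsymb μ ξ ^ p) ∧
      ∀ n : ℕ, ∃ C : ℝ, 0 < C ∧ ∀ μ : ℝ, 0 < μ → ∀ ξ : ℝ,
        |iteratedDeriv n (fun ζ ↦ Tsymb μ ζ ^ p) ξ|
          ≤ C * μ ^ ((n : ℝ) / 2) * jap (√μ * ξ) ^ (-p - n) := by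
  refine ⟨fun μ hμ ↦ ?_, fun n ↦ ?_⟩
  · simp only [Tsymb_eq_tanhc hμ]
    exact (contDiff_tanhc.comp (contDiff_const.mul contDiff_id)).rpow_const_of_ne
      fun ξ ↦ (tanhc_pos _).ne'
  · obtain ⟨C, hC₀, hC⟩ := (isSymbol_tanhc_rpow n p).exists_norm_iteratedDeriv_comp_mul_le
    refine ⟨C, hC₀, fun μ hμ ξ ↦ ?_⟩
    have hpow : |√μ| ^ n = μ ^ ((n : ℝ) / 2) := by
      rw [abs_of_nonneg (Real.sqrt_nonneg μ), Real.rpow_div_two_eq_sqrt _ hμ.le, Real.rpow_natCast]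
    simpa only [Tsymb_eq_tanhc hμ, hpow, Real.norm_eq_abs] using hC √μ ξ

/-- For `μ ∈ (0,1]`, the function `h_μ = T_μ^{-1/2}` is smooth on `ℝ`, and for
every `n ∈ ℕ` there is a constant `C_n`, independent of `μ`, with
`|h_μ^{(n)}(ξ)| ≤ C_n μ^{n/2} ⟨√μ ξ⟩^{1/2 - n}` for all `ξ ∈ ℝ`. -/
theorem hsymb_smooth_and_deriv_bounds :
    (∀ μ : ℝ, 0 < μ → μ ≤ 1 → ContDiff ℝ (⊤ : ℕ∞) (hsymb μ)) ∧
      ∀ n : ℕ, ∃ C : ℝ, 0 < C ∧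
        ∀ μ : ℝ, 0 < μ → μ ≤ 1 → ∀ ξ : ℝ,
          |iteratedDeriv n (hsymb μ) ξ|
            ≤ C * μ ^ ((n : ℝ) / 2) * jap (Real.sqrt μ * ξ) ^ ((1 : ℝ) / 2 - n) := by
  obtain ⟨hsmooth, hbound⟩ := hsymb_smooth_and_deriv_bounds_general (-1 / 2)
  rw [show -(-1 / 2 : ℝ) = 1 / 2 by norm_num] at hbound
  exact ⟨fun μ hμ _ ↦ hsmooth μ hμ,
    fun n ↦ (hbound n).imp fun _ ⟨hC₀, hC⟩ ↦ ⟨hC₀, fun μ hμ _ ↦ hC μ hμ⟩⟩
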